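/- arXiv:0810.3535 — 3 statements merged into one kernel-verified Lean document; each statement's English description precedes it below -/
import Mathlib

section
/- Let O be a commutative ring and π ∈ O. Let f and g be polynomials in O[X₀,X₁,X₂,X₃], each homogeneous of degree 3, with f not involving the variable X₃, and let a ∈ O be the coefficient of the monomial X₃³ in g. Set F = f + π³·g. Then there exists a polynomial h ∈ O[X₀,X₁,X₂,X₃], homogeneous of degree 3, such that the polynomial obtained from F by the substitution X₀ ↦ π·X₀, X₁ ↦ π·X₁, X₂ ↦ π·X₂, X₃ ↦ X₃ equals π³·(f + a·X₃³ + π·h). -/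
open MvPolynomial

lemma key_aux {O : Type*} [CommRing O] (π : O) (m : Fin 4 →₀ ℕ) (c : O) :
    (bind₁ (fun i : Fin 4 => if i = 3 then (X 3 : MvPolynomial (Fin 4) O) else C π * X i))
      (monomial m c) = C (π ^ (m 0 + m 1 + m 2)) * monomial m c := by
  rw [monomial_eq, Finsupp.prod_fintype _ _ (by simp)]
  simp only [map_mul, map_pow, bind₁_X_right, bind₁_C_right, Fin.prod_univ_four]
  simp only [show (0 : Fin 4) ≠ 3 by decide, show (1 : Fin 4) ≠ 3 by decide,
    show (2 : Fin 4) ≠ 3 by decide, if_true, if_false]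
  ring

lemma deg_aux {O : Type*} [CommRing O] {p : MvPolynomial (Fin 4) O} (hp : p.IsHomogeneous 3)
    {m : Fin 4 →₀ ℕ} (hm : m ∈ p.support) : m 0 + m 1 + m 2 + m 3 = 3 := by
  have h : m.degree = 3 := by
    have h := hp (mem_support_iff.1 hm)
    rw [Finsupp.degree_eq_weight_one]
    exact h
  rw [Finsupp.degree_eq_sum, Fin.sum_univ_four] at h
  exact h

/-- Let `O` be a commutative ring and `π ∈ O`.  Let `f, g ∈ O[X₀,X₁,X₂,X₃]` be
homogeneous of degree 3, with `f` not involving `X₃`, and let `a` be the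
coefficient of `X₃³` in `g`.  Set `F = f + π³ g`.  Then there is a homogeneous
cubic `h` such that substituting `Xᵢ ↦ π Xᵢ` for `i = 0,1,2` in `F` yields
`π³ (f + a X₃³ + π h)`. -/
theorem stmt1 {O : Type*} [CommRing O] (π : O)
    (f g : MvPolynomial (Fin 4) O)
    (hf : f.IsHomogeneous 3) (hg : g.IsHomogeneous 3)
    (hf3 : ∀ m ∈ f.support, m 3 = 0)
    (a : O) (ha : a = g.coeff (Finsupp.single 3 3))
    (F : MvPolynomial (Fin 4) O) (hF : F = f + C (π ^ 3) * g) :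
    ∃ h : MvPolynomial (Fin 4) O, h.IsHomogeneous 3 ∧
      (bind₁ (fun i : Fin 4 => if i = 3 then X 3 else C π * X i)) F
        = C (π ^ 3) * (f + C a * X 3 ^ 3 + C π * h) := by
  set φ := bind₁ (fun i : Fin 4 => if i = 3 then (X 3 : MvPolynomial (Fin 4) O) else C π * X i)
    with hφ
  have h1 : φ f = C (π ^ 3) * f := by
    conv_lhs => rw [f.as_sum]
    conv_rhs => rw [f.as_sum]
    rw [map_sum, Finset.mul_sum]
    refine Finset.sum_congr rfl fun m hm => ?_
    rw [hφ, key_aux]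
    have := deg_aux hf hm
    have h3 := hf3 m hm
    rw [show m 0 + m 1 + m 2 = 3 by omega]
  refine ⟨∑ m ∈ g.support.erase (Finsupp.single 3 3),
    C (π ^ (m 0 + m 1 + m 2 - 1)) * monomial m (g.coeff m), ?_, ?_⟩
  · refine IsHomogeneous.sum _ _ _ fun m hm => ?_
    rw [C_mul_monomial]
    refine isHomogeneous_monomial _ ?_
    rw [Finsupp.degree_eq_sum, Fin.sum_univ_four]
    exact deg_aux hg (Finset.mem_of_mem_erase hm)
  · have h2 : φ g = C a * X 3 ^ 3 + C π * ∑ m ∈ g.support.erase (Finsupp.single 3 3),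
        C (π ^ (m 0 + m 1 + m 2 - 1)) * monomial m (g.coeff m) := by
      have e : g = monomial (Finsupp.single 3 3) a +
          ∑ m ∈ g.support.erase (Finsupp.single 3 3), monomial m (g.coeff m) := by
        by_cases hs : Finsupp.single 3 3 ∈ g.support
        · rw [ha, Finset.add_sum_erase _ (fun m => monomial m (g.coeff m)) hs]
          exact g.as_sum
        · rw [Finset.erase_eq_of_notMem hs, ha, notMem_support_iff.1 hs, map_zero, zero_add]
          exact g.as_sum
      conv_lhs => rw [e]
      rw [map_add, map_sum, Finset.mul_sum]
      congr 1
      · rw [hφ, key_aux, C_mul_X_pow_eq_monomial]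
        simp
      · refine Finset.sum_congr rfl fun m hm => ?_
        rw [hφ, key_aux, ← mul_assoc, ← C_mul, ← pow_succ']
        have hd := deg_aux hg (Finset.mem_of_mem_erase hm)
        have hne := Finset.ne_of_mem_erase hm
        have : m 0 + m 1 + m 2 ≠ 0 := by
          intro h0
          apply hne
          ext i
          fin_cases i <;> simp <;> omega
        rw [Nat.sub_add_cancel (by omega)]
    rw [hF, map_add, map_mul, h1, h2, hφ, bind₁_C_right]
    ring
end

section
/- Let F be an algebraically closed field in which 3 ≠ 0. Let f ∈ F[X₀,X₁,X₂,X₃] be homogeneous of degree 3 and not involving X₃, and suppose that the only common zero (x₀,x₁,x₂,x₃) ∈ F⁴ of the three partial derivatives ∂f/∂X₀, ∂f/∂X₁, ∂f/∂X₂ with x₃ = 0 is (0,0,0,0). Let a ∈ F be nonzero and set G = f + a·X₃³. Then the only common zero in F⁴ of the four partial derivatives ∂G/∂X₀, ∂G/∂X₁, ∂G/∂X₂, ∂G/∂X₃ is (0,0,0,0). -/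
open MvPolynomial

/-- Let `F` be an algebraically closed field with `3 ≠ 0`.  Let
`f ∈ F[X₀,X₁,X₂,X₃]` be homogeneous of degree 3 not involving `X₃`, such that
the only common zero of `∂f/∂X₀, ∂f/∂X₁, ∂f/∂X₂` with `x₃ = 0` is the origin.
Let `a ≠ 0` and `G = f + a X₃³`.  Then the only common zero of the four partial
derivatives of `G` is the origin. -/
theorem stmt2 {F : Type*} [Field F] [IsAlgClosed F] (h3 : (3 : F) ≠ 0)
    (f : MvPolynomial (Fin 4) F) (hf : f.IsHomogeneous 3)
    (hf3 : ∀ m ∈ f.support, m 3 = 0)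
    (hsm : ∀ x : Fin 4 → F, x 3 = 0 →
      (∀ i : Fin 4, i ≠ 3 → eval x (pderiv i f) = 0) → x = 0)
    (a : F) (ha : a ≠ 0)
    (G : MvPolynomial (Fin 4) F) (hG : G = f + C a * X 3 ^ 3) :
    ∀ x : Fin 4 → F, (∀ i : Fin 4, eval x (pderiv i G) = 0) → x = 0 := by
  intro x hx
  have h3f : pderiv 3 f = 0 := by
    apply pderiv_eq_zero_of_notMem_vars
    rw [mem_vars]
    rintro ⟨m, hm, hm3⟩
    exact (Finsupp.mem_support_iff.mp hm3) (hf3 m hm)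
  have hx3 : x 3 = 0 := by
    have h := hx 3
    rw [hG, map_add, h3f, pderiv_C_mul, pderiv_pow, pderiv_X_self] at h
    simpa [ha, h3] using h
  apply hsm x hx3
  intro i hi
  have h := hx i
  rw [hG, map_add, pderiv_C_mul, pderiv_pow, pderiv_X_of_ne (Ne.symm hi)] at h
  simpa using h
end

section
/- Let O be a discrete valuation ring with maximal ideal m and uniformizer π. Let f ∈ O[X₀,X₁,X₂,X₃] be homogeneous of degree 3 and not involving X₃, and let g ∈ O[X₀,X₁,X₂,X₃] be homogeneous of degree 3 whose coefficient of X₃³ is a unit of O. Let s be 1 or 2. Then there do not exist x₀, x₁, x₂ ∈ m and a unit x₃ ∈ O such that f(x₀,x₁,x₂,x₃) + π^s · g(x₀,x₁,x₂,x₃) = 0. -/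
open MvPolynomial

/-- Let `O` be a discrete valuation ring with maximal ideal `m` and uniformizer
`π`.  Let `f ∈ O[X₀,X₁,X₂,X₃]` be homogeneous of degree 3 not involving `X₃`,
and let `g` be homogeneous of degree 3 whose coefficient of `X₃³` is a unit.
Let `s` be 1 or 2.  Then there are no `x₀, x₁, x₂ ∈ m` and unit `x₃ ∈ O` with
`f(x) + π^s g(x) = 0`. -/
theorem stmt3 {O : Type*} [CommRing O] [IsDomain O] [IsDiscreteValuationRing O]
    (π : O) (hπ : Irreducible π)
    (f g : MvPolynomial (Fin 4) O)
    (hf : f.IsHomogeneous 3) (hf3 : ∀ m ∈ f.support, m 3 = 0)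
    (hg : g.IsHomogeneous 3) (hgu : IsUnit (g.coeff (Finsupp.single 3 3)))
    (s : ℕ) (hs : s = 1 ∨ s = 2) :
    ¬ ∃ x : Fin 4 → O,
        x 0 ∈ IsLocalRing.maximalIdeal O ∧
        x 1 ∈ IsLocalRing.maximalIdeal O ∧
        x 2 ∈ IsLocalRing.maximalIdeal O ∧
        IsUnit (x 3) ∧
        eval x f + π ^ s * eval x g = 0 := by
  rintro ⟨x, h0, h1, h2, h3, he⟩
  rw [hπ.maximalIdeal_eq, Ideal.mem_span_singleton] at h0 h1 h2
  have deg : ∀ p : MvPolynomial (Fin 4) O, p.IsHomogeneous 3 → ∀ d ∈ p.support,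
      d 0 + d 1 + d 2 + d 3 = 3 := by
    intro p hp d hd
    have h := hp (mem_support_iff.mp hd)
    have h' : d.degree = 3 := by
      rw [Finsupp.degree_eq_weight_one]
      exact h
    rw [Finsupp.degree_eq_sum, Fin.sum_univ_four] at h'
    exact h'
  have hfd : π ^ 3 ∣ eval x f := by
    rw [eval_eq']
    refine Finset.dvd_sum fun d hd => Dvd.dvd.mul_left ?_ _
    have h := deg f hf d hd
    have h' := hf3 d hd
    rw [Fin.prod_univ_four, h', pow_zero, mul_one,
      show π ^ 3 = π ^ (d 0 + d 1 + d 2) from congrArg _ (by omega), pow_add, pow_add]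
    exact mul_dvd_mul (mul_dvd_mul (pow_dvd_pow_of_dvd h0 _) (pow_dvd_pow_of_dvd h1 _))
      (pow_dvd_pow_of_dvd h2 _)
  have hgd : π ∣ eval x g := by
    have hπ0 := hπ.ne_zero
    have h : π ^ 3 ∣ π ^ s * eval x g := by
      rw [← dvd_add_right hfd, he]
      exact dvd_zero _
    have h4 : π ^ s * π ∣ π ^ s * eval x g := by
      rw [← pow_succ]
      exact (pow_dvd_pow π (by omega)).trans h
    exact (mul_dvd_mul_iff_left (pow_ne_zero s hπ0)).mp h4
  have hmem : (Finsupp.single 3 3 : Fin 4 →₀ ℕ) ∈ g.support := by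
    rw [mem_support_iff]
    exact hgu.ne_zero
  rw [eval_eq', ← Finset.add_sum_erase _ _ hmem] at hgd
  have hrest : π ∣ ∑ d ∈ g.support.erase (Finsupp.single 3 3),
      g.coeff d * ∏ i, x i ^ d i := by
    refine Finset.dvd_sum fun d hd => Dvd.dvd.mul_left ?_ _
    obtain ⟨hne, hd⟩ := Finset.mem_erase.mp hd
    have h := deg g hg d hd
    have key : ∀ i : Fin 4, π ∣ x i → d i ≠ 0 → π ∣ ∏ i, x i ^ d i := fun i hi hdi =>
      (dvd_pow hi hdi).trans (Finset.dvd_prod_of_mem (fun i => x i ^ d i) (Finset.mem_univ i))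
    by_cases c0 : d 0 = 0
    · by_cases c1 : d 1 = 0
      · by_cases c2 : d 2 = 0
        · exfalso
          apply hne
          have c3 : d 3 = 3 := by omega
          ext i
          fin_cases i <;> simp [c0, c1, c2, c3]
        · exact key 2 h2 c2
      · exact key 1 h1 c1
    · exact key 0 h0 c0
  have hfin := (dvd_add_left hrest).mp hgd
  apply hπ.not_isUnit
  refine isUnit_of_dvd_unit hfin (hgu.mul ?_)
  rw [Fin.prod_univ_four]
  simpa using h3.pow 3
end
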